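/- arXiv:2605.20579 — 3 statements merged into one kernel-verified Lean document; each statement's English description precedes it below -/
import Mathlib

section
/- Let I be a fractional ideal of K, let β be a nonzero element of I, and let α be a nonzero element of N_{K/F}(I). Then the quotient groups I/(βO_K) and N_{K/F}(I)/(αO_F) are finite and #(I/(βO_K)) / #(N_{K/F}(I)/(αO_F)) = ∏_{v ∈ Σ_{F,∞}} |β|_v² / |α|_v. -/
/-!
Write `I = e J` with `J` an integral ideal of `𝓞 K` and `e ∈ Kˣ`. Since `β * c β` is the norm of
`β` from `K` to `F`, the module `normSpan F K c I` equals `N(e)` times the relative ideal norm of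
`J` (`normSpan_eq_map_relNorm`), and the relative norm preserves absolute norms. For a fractional
ideal `e J` of a number field `L` containing `x ≠ 0`, `[e J : (x)] * N(J) * |N(e)| = |N(x)|`
(`card_quotient_mul_absNorm`). Applying this to `I` over `K` and to `N_{K/F}(I)` over `F`, the
factors `N(J)` and `|N(e)|` agree, so the quotient of the two indices is `|N(β)| / |N(α)|`.
Each norm is the product of the absolute values at the infinite places, and the places of `K`
correspond bijectively to those of `F` (`bijective_of_comap_eq`).
-/


open NumberField

variable (F K : Type) [Field F] [NumberField F] [Field K] [NumberField K] [Algebra F K]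

/-- The fractional ideal `N_{K/F}(I)` of `F`, realized as the `𝓞 F`-submodule of `F`
generated by the elements `β * c β` for `β ∈ I`. -/
noncomputable def normSpan (c : K ≃ₐ[F] K) (I : FractionalIdeal (nonZeroDivisors (𝓞 K)) K) :
    Submodule (𝓞 F) F :=
  Submodule.span (𝓞 F) {x : F | ∃ β ∈ (I : Submodule (𝓞 K) K), algebraMap F K x = β * c β}

/-- The `𝓞 L`-linear map `𝓞 L → L`, `t ↦ e * t`; its images of ideals are the fractional ideals
`e J`. -/
noncomputable def scaledEmbedding (L : Type) [Field L] (e : L) : 𝓞 L →ₗ[𝓞 L] L :=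
  LinearMap.mulLeft (𝓞 L) e ∘ₗ Algebra.linearMap (𝓞 L) L

theorem scaledEmbedding_apply (L : Type) [Field L] (e : L) (t : 𝓞 L) :
    scaledEmbedding L e t = e * (t : L) := rfl

/-- The index of a principal fractional ideal `(x)` inside a fractional ideal `M = e J` satisfies
`[M : (x)] * N(J) = |N(x / e)|`: dividing by `e` reduces this to `[𝓞 L : (y)] = |N(y)|` and the
multiplicativity of the index along `(y) ≤ J ≤ 𝓞 L`. -/
theorem card_quotient_mul_absNorm (L : Type) [Field L] [NumberField L] (M : Submodule (𝓞 L) L)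
    (J : Ideal (𝓞 L)) (e : L) (he : e ≠ 0) (hM : M = Submodule.map (scaledEmbedding L e) J)
    (x : L) (hx : x ∈ M) (hx0 : x ≠ 0) :
    J ≠ ⊥ ∧ Finite (M ⧸ Submodule.comap M.subtype (Submodule.span (𝓞 L) {x})) ∧
    (Nat.card (M ⧸ Submodule.comap M.subtype (Submodule.span (𝓞 L) {x})) : ℚ) *
      Ideal.absNorm J * |Algebra.norm ℚ e| = |Algebra.norm ℚ x| := by
  subst hM
  obtain ⟨y, hy, rfl⟩ := hx
  have hy0 : y ≠ 0 := by
    rintro rfl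
    simp at hx0
  have hJ : J ≠ ⊥ := fun h => hy0 (by simpa [h] using hy)
  have hinj : Function.Injective (scaledEmbedding L e) := by
    intro a b hab
    simpa [scaledEmbedding_apply, he] using hab
  have hspan : Submodule.span (𝓞 L) {scaledEmbedding L e y} =
      Submodule.map (scaledEmbedding L e) (Ideal.span {y}) := by
    rw [Ideal.span, Submodule.map_span, Set.image_singleton]
  have hcard : Nat.card (Submodule.map (scaledEmbedding L e) J ⧸
      Submodule.comap (Submodule.map (scaledEmbedding L e) J).subtype
        (Submodule.span (𝓞 L) {scaledEmbedding L e y})) =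
      (Ideal.span {y}).toAddSubgroup.relIndex J.toAddSubgroup := by
    rw [hspan]
    exact AddSubgroup.relIndex_map_map_of_injective (f := (scaledEmbedding L e).toAddMonoidHom)
      (Ideal.span {y}).toAddSubgroup J.toAddSubgroup hinj
  have hmul : (Ideal.span {y}).toAddSubgroup.relIndex J.toAddSubgroup * Ideal.absNorm J =
      Ideal.absNorm (Ideal.span {y}) :=
    AddSubgroup.relIndex_mul_index (H := (Ideal.span {y}).toAddSubgroup) (K := J.toAddSubgroup)
      (fun z hz => (Ideal.span_singleton_le_iff_mem J).mpr hy hz)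
  have hne : Ideal.absNorm (Ideal.span {y}) ≠ 0 := by
    rw [Ne, Ideal.absNorm_eq_zero_iff, Ideal.span_singleton_eq_bot]
    exact hy0
  refine ⟨hJ, ?_, ?_⟩
  · apply Nat.finite_of_card_ne_zero
    rw [hcard]
    intro h
    rw [h, zero_mul] at hmul
    exact hne hmul.symm
  · rw [hcard, ← Nat.cast_mul, hmul, Ideal.absNorm_span_singleton, scaledEmbedding_apply, map_mul,
      abs_mul, mul_comm, Nat.cast_natAbs, Int.cast_abs, Algebra.coe_norm_int]

theorem algebraMap_norm_eq_mul_conj (hquadratic : Module.finrank F K = 2)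
    (c : K ≃ₐ[F] K) (hc : c ≠ AlgEquiv.refl) (x : K) :
    algebraMap F K (Algebra.norm F x) = x * c x := by
  classical
  have : Algebra.IsQuadraticExtension F K := ⟨hquadratic⟩
  have hcard : Fintype.card (K ≃ₐ[F] K) = 2 := by
    rw [← Nat.card_eq_fintype_card, IsGalois.card_aut_eq_finrank, hquadratic]
  have huniv : (Finset.univ : Finset (K ≃ₐ[F] K)) = {AlgEquiv.refl, c} := by
    symm
    apply Finset.eq_univ_of_card
    rw [Finset.card_pair hc.symm, hcard]
  rw [Algebra.norm_eq_prod_automorphisms, huniv, Finset.prod_pair hc.symm]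
  rfl

/-- If `I = e J` with `J` an integral ideal, then `N_{K/F}(I) = N(e) N_{K/F}(J)`, where the norm of
`J` is the relative ideal norm, generated by the norms of the elements of `J`. -/
theorem normSpan_eq_map_relNorm (hquadratic : Module.finrank F K = 2)
    (c : K ≃ₐ[F] K) (hc : c ≠ AlgEquiv.refl)
    (I : FractionalIdeal (nonZeroDivisors (𝓞 K)) K) (J : Ideal (𝓞 K)) (e : K)
    (hI : (I : Submodule (𝓞 K) K) = Submodule.map (scaledEmbedding K e) J) :
    normSpan F K c I =
      Submodule.map (scaledEmbedding F (Algebra.norm F e)) (Ideal.relNorm (𝓞 F) J) := by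
  have hint : ∀ b : 𝓞 K, ((Algebra.intNorm (𝓞 F) (𝓞 K) b : 𝓞 F) : F) =
      Algebra.norm F (b : K) := fun b =>
    Algebra.algebraMap_intNorm (A := 𝓞 F) (K := F) (L := K) (B := 𝓞 K) b
  rw [Ideal.relNorm_apply, Ideal.span, Submodule.map_span, normSpan]
  congr 1
  ext x
  constructor
  · rintro ⟨b, hb, hx⟩
    rw [hI] at hb
    obtain ⟨t, ht, rfl⟩ := hb
    refine ⟨_, ⟨t, ht, rfl⟩, ?_⟩
    rw [← algebraMap_norm_eq_mul_conj F K hquadratic c hc] at hx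
    rw [(algebraMap F K).injective hx, scaledEmbedding_apply, scaledEmbedding_apply, map_mul, hint]
  · rintro ⟨_, ⟨t, ht, rfl⟩, rfl⟩
    refine ⟨scaledEmbedding K e t, ?_, ?_⟩
    · rw [hI]
      exact ⟨t, ht, rfl⟩
    · rw [← algebraMap_norm_eq_mul_conj F K hquadratic c hc, scaledEmbedding_apply,
        scaledEmbedding_apply, map_mul (Algebra.norm F), hint]

open scoped Pointwise in
theorem exists_eq_map_scaledEmbedding (I : FractionalIdeal (nonZeroDivisors (𝓞 K)) K) :
    ∃ (J : Ideal (𝓞 K)) (e : K), e ≠ 0 ∧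
      (I : Submodule (𝓞 K) K) = Submodule.map (scaledEmbedding K e) J := by
  have hd : ((I.den : 𝓞 K) : K) ≠ 0 := by
    simp
  have h : ∀ z : K, z ∈ I.den • (I : Submodule (𝓞 K) K) ↔
      z ∈ Submodule.map (Algebra.linearMap (𝓞 K) K) I.num := by
    intro z
    rw [I.den_mul_self_eq_num]
  refine ⟨I.num, ((I.den : 𝓞 K) : K)⁻¹, inv_ne_zero hd, ?_⟩
  ext x
  constructor
  · intro hx
    obtain ⟨t, ht, htx⟩ := (h _).mp (Submodule.smul_mem_pointwise_smul x I.den _ hx)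
    refine ⟨t, ht, ?_⟩
    rw [scaledEmbedding_apply]
    have : (t : K) = (I.den : 𝓞 K) * x := htx
    rw [this, inv_mul_cancel_left₀ hd]
  · rintro ⟨t, ht, rfl⟩
    obtain ⟨z, hz, hzt⟩ := (h t).mpr ⟨t, ht, rfl⟩
    have : ((I.den : 𝓞 K) : K) * z = t := hzt
    rw [scaledEmbedding_apply, ← this, inv_mul_cancel_left₀ hd]
    exact hz

/-- Exactly one place of `K` lies above each place of `F`: `K` has `[K : ℚ] / 2 = [F : ℚ]` infinite
places, as many as `F`, so choosing a place above each place of `F` is a bijection. -/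
theorem bijective_of_comap_eq
    (htotallyReal : ∀ v : InfinitePlace F, v.IsReal)
    (htotallyImaginary : ∀ w : InfinitePlace K, w.IsComplex)
    (hquadratic : Module.finrank F K = 2)
    (w : InfinitePlace F → InfinitePlace K)
    (hw : ∀ v, (w v).comap (algebraMap F K) = v) : Function.Bijective w := by
  have : IsTotallyReal F := ⟨htotallyReal⟩
  have : IsTotallyComplex K := ⟨htotallyImaginary⟩
  rw [Fintype.bijective_iff_injective_and_card]
  refine ⟨Function.LeftInverse.injective
    (g := fun u : InfinitePlace K => u.comap (algebraMap F K)) hw, ?_⟩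
  have h1 := Module.finrank_mul_finrank ℚ F K
  have h2 := IsTotallyReal.finrank F
  have h3 := IsTotallyComplex.finrank K
  rw [InfinitePlace.card_eq_nrRealPlaces_add_nrComplexPlaces,
    InfinitePlace.card_eq_nrRealPlaces_add_nrComplexPlaces,
    IsTotallyComplex.nrRealPlaces_eq_zero (K := K), IsTotallyReal.nrComplexPlaces_eq_zero (K := F)]
  rw [hquadratic] at h1
  omega

/-- Let `F` be a totally real number field and `K` a totally imaginary quadratic extension
of `F`, with `c` the nontrivial element of `Gal(K/F)`.  Let `I` be a fractional ideal of `K`,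
`β` a nonzero element of `I` and `α` a nonzero element of `N_{K/F}(I)`.  Then the quotients
`I/(β 𝓞_K)` and `N_{K/F}(I)/(α 𝓞_F)` are finite and
`#(I/(β)) / #(N_{K/F}(I)/(α)) = ∏_{v ∈ Σ_{F,∞}} |β|_v² / |α|_v`,
where for each infinite place `v` of `F` the absolute value `|β|_v` is computed using the
(arbitrarily chosen) infinite place `w v` of `K` lying above `v`. -/
theorem index_formula
    (htotallyReal : ∀ v : InfinitePlace F, v.IsReal)
    (htotallyImaginary : ∀ w : InfinitePlace K, w.IsComplex)
    (hquadratic : Module.finrank F K = 2)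
    (c : K ≃ₐ[F] K) (hc : c ≠ AlgEquiv.refl)
    (I : FractionalIdeal (nonZeroDivisors (𝓞 K)) K)
    (β : K) (hβ : β ∈ I) (hβ0 : β ≠ 0)
    (α : F) (hα : α ∈ normSpan F K c I) (hα0 : α ≠ 0)
    (w : InfinitePlace F → InfinitePlace K)
    (hw : ∀ v, (w v).comap (algebraMap F K) = v) :
    Finite ((I : Submodule (𝓞 K) K) ⧸
        (Submodule.comap (I : Submodule (𝓞 K) K).subtype (Submodule.span (𝓞 K) {β}))) ∧
    Finite ((normSpan F K c I) ⧸
        (Submodule.comap (normSpan F K c I).subtype (Submodule.span (𝓞 F) {α}))) ∧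
    (Nat.card ((I : Submodule (𝓞 K) K) ⧸
        (Submodule.comap (I : Submodule (𝓞 K) K).subtype (Submodule.span (𝓞 K) {β}))) : ℝ) /
      (Nat.card ((normSpan F K c I) ⧸
        (Submodule.comap (normSpan F K c I).subtype (Submodule.span (𝓞 F) {α}))) : ℝ) =
      ∏ v : InfinitePlace F, ((w v) β) ^ 2 / (v α) := by
  have : IsTotallyReal F := ⟨htotallyReal⟩
  have : IsTotallyComplex K := ⟨htotallyImaginary⟩
  obtain ⟨J, e, he, hI⟩ := exists_eq_map_scaledEmbedding K I
  have hN := normSpan_eq_map_relNorm F K hquadratic c hc I J e hI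
  have he' : Algebra.norm F e ≠ 0 := Algebra.norm_ne_zero_iff.mpr he
  obtain ⟨hJ, hfinK, hK⟩ := card_quotient_mul_absNorm K _ J e he hI β hβ hβ0
  obtain ⟨-, hfinF, hF⟩ := card_quotient_mul_absNorm F _ _ _ he' hN α hα hα0
  refine ⟨hfinK, hfinF, ?_⟩
  rw [Ideal.absNorm_relNorm, Algebra.norm_norm] at hF
  have hprodK : ∏ v : InfinitePlace F, (w v) β ^ 2 = ((|Algebra.norm ℚ β| : ℚ) : ℝ) := by
    rw [← InfinitePlace.prod_eq_abs_norm,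
      ← (bijective_of_comap_eq F K htotallyReal htotallyImaginary hquadratic w hw).prod_comp]
    simp [IsTotallyComplex.mult_eq]
  have hprodF : ∏ v : InfinitePlace F, v α = ((|Algebra.norm ℚ α| : ℚ) : ℝ) := by
    rw [← InfinitePlace.prod_eq_abs_norm]
    simp [IsTotallyReal.mult_eq]
  rw [Finset.prod_div_distrib, hprodK, hprodF, ← hK, ← hF]
  have hJ' : (Ideal.absNorm J : ℝ) ≠ 0 := by
    simpa [Ideal.absNorm_eq_zero_iff] using hJ
  have heQ : ((|Algebra.norm ℚ e| : ℚ) : ℝ) ≠ 0 := by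
    simpa using he
  simp only [Rat.cast_mul, Rat.cast_natCast]
  rw [mul_div_mul_right _ _ heQ, mul_div_mul_right _ _ hJ']
end

section
/- Let S_F be a finite set of prime ideals of O_F and k a function from S_F to the positive integers. Assume that each prime ideal in S_F splits in K. Then there exists a fractional ideal I of K and a nonzero element α ∈ N_{K/F}(I) such that the number of β ∈ I with β·c(β) = α is at least (∏_{𝔭 ∈ S_F} (k(𝔭)+1)) / (2^d · h⁻(K)), and #(N_{K/F}(I)/(αO_F)) = ∏_{𝔭 ∈ S_F} #(O_F/𝔭)^{k(𝔭)}. -/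
/-!
For each `𝔭 ∈ S` write `𝔭 𝓞_K = Q_𝔭 · c(Q_𝔭)`, and for a tuple `j` with `0 ≤ j_𝔭 ≤ k_𝔭` put
`B_j = ∏ Q_𝔭 ^ j_𝔭`, `B'_j = ∏ Q_𝔭 ^ (k_𝔭 - j_𝔭)` and `J_j = B_j · c(B'_j)`.  The ideals `J_j` are
pairwise distinct (`exponents_injective`) and all satisfy `J_j · c(J_j) = 𝔞 𝓞_K` with
`𝔞 = ∏ 𝔭 ^ k_𝔭`, so all have relative norm `𝔞`.

There are `∏ (k_𝔭 + 1)` tuples.  Sort them by the class of `B_j` in the quotient `X` of `Cl(K)` by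
the image of `Cl(F)`.  If `B_j` and `B_i` have the same class in `X`, then `(x) B_j = (y) B_i A` for
an ideal `A` of `𝓞_F`.  Multiplying this relation by the conjugate relation for `B'`, the extended
ideal `A` cancels, because it is fixed by `c`, and `(x · c y) J_j = (y · c x) J_i` remains
(`exists_gen`).  Fix `i` in a largest fibre and choose `I` with `J_i I = (n)`, where
`0 ≠ n ∈ 𝔞`.  Each `J_j I` with `j` in that fibre is generated by an element `b` with
`b · c b = n²`.  These `b` are distinct elements of `I`, and `α = n²` satisfies
`(α) = N(I) 𝔞`, which gives the index (`normQuotCard_coeIdeal`).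

The bound `#X ≤ 2 h(K) / h(F)` (`card_quotient_le`) amounts to the kernel of `Cl(F) → Cl(K)` having
order at most two (`card_ker_le`).  If `A 𝓞_K = (γ)`, then `c γ / γ` is a unit of absolute value
one in every embedding, hence a root of unity `ζ`, and the class of `A` is determined by `ζ` modulo
squares; roots of unity form a cyclic group.  Finally `2 ≤ 2 ^ d`.
-/

open NumberField

variable (F K : Type) [Field F] [NumberField F] [Field K] [NumberField K] [Algebra F K]

/-- The cardinality of the quotient `N_{K/F}(I)/(α 𝓞_F)`. -/
noncomputable def normQuotCard (c : K ≃ₐ[F] K) (I : FractionalIdeal (nonZeroDivisors (𝓞 K)) K)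
    (α : F) : ℕ :=
  Nat.card ((normSpan F K c I) ⧸
    (Submodule.comap (normSpan F K c I).subtype (Submodule.span (𝓞 F) {α})))

section
set_option linter.unusedSectionVars false
open scoped Pointwise nonZeroDivisors
variable {F K}

/-! ### Complex conjugation on `K` -/

theorem gal_cases (h2 : Module.finrank F K = 2) {c : K ≃ₐ[F] K} (hc : c ≠ AlgEquiv.refl)
    (σ : K ≃ₐ[F] K) : σ = 1 ∨ σ = c := by
  have hq : Algebra.IsQuadraticExtension F K := ⟨h2⟩
  have hcard : Nat.card (K ≃ₐ[F] K) = 2 := by rw [IsGalois.card_aut_eq_finrank, h2]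
  obtain ⟨x, y, hxy, hu⟩ := Nat.card_eq_two_iff.1 hcard
  have key : ∀ τ : K ≃ₐ[F] K, τ = x ∨ τ = y := fun τ => by
    have := hu.symm ▸ Set.mem_univ τ
    simpa using this
  have hc' : c ≠ 1 := hc
  rcases key σ with h | h <;> rcases key c with h' | h' <;> rcases key 1 with h'' | h'' <;> grind

theorem conj_conj (h2 : Module.finrank F K = 2) {c : K ≃ₐ[F] K} (hc : c ≠ AlgEquiv.refl) :
    c * c = 1 := by
  rcases gal_cases h2 hc (c * c) with h | h
  · exact h
  · exact absurd (mul_eq_left.1 h) hc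

theorem mem_range_of_conj_eq (h2 : Module.finrank F K = 2) {c : K ≃ₐ[F] K}
    (hc : c ≠ AlgEquiv.refl) {x : K} (hx : c x = x) : ∃ r : F, algebraMap F K r = x := by
  have hq : Algebra.IsQuadraticExtension F K := ⟨h2⟩
  refine (IsGalois.mem_range_algebraMap_iff_fixed x).2 fun σ => ?_
  rcases gal_cases h2 hc σ with rfl | rfl
  · rfl
  · exact hx

theorem norm_eq (h2 : Module.finrank F K = 2) {c : K ≃ₐ[F] K}
    (hc : c ≠ AlgEquiv.refl) (x : K) : algebraMap F K (Algebra.norm F x) = x * c x := by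
  classical
  have hq : Algebra.IsQuadraticExtension F K := ⟨h2⟩
  have hu : (Finset.univ : Finset (K ≃ₐ[F] K)) = {1, c} := by
    ext σ; simpa using gal_cases h2 hc σ
  rw [Algebra.norm_eq_prod_automorphisms, hu, Finset.prod_pair (show (1 : K ≃ₐ[F] K) ≠ c from Ne.symm hc)]
  rfl

theorem embedding_conj (hF : ∀ v : InfinitePlace F, v.IsReal)
    (hK : ∀ w : InfinitePlace K, w.IsComplex) (h2 : Module.finrank F K = 2) {c : K ≃ₐ[F] K}
    (hc : c ≠ AlgEquiv.refl) (φ : K →+* ℂ) (x : K) :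
    φ (c x) = (starRingEnd ℂ) (φ x) := by
  have hq : Algebra.IsQuadraticExtension F K := ⟨h2⟩
  have hreal : ComplexEmbedding.IsReal (φ.comp (algebraMap F K)) := by
    have := hF (InfinitePlace.mk (φ.comp (algebraMap F K)))
    exact InfinitePlace.isReal_mk_iff.1 this
  have hcpx : ¬ ComplexEmbedding.IsReal φ := by
    exact InfinitePlace.isComplex_mk_iff.1 (hK (InfinitePlace.mk φ))
  obtain ⟨σ, hσ⟩ := InfinitePlace.ComplexEmbedding.exists_comp_symm_eq_of_comp_eq (k := F) φ
    (ComplexEmbedding.conjugate φ) (by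
      ext r
      exact (RingHom.congr_fun hreal r).symm)
  rcases gal_cases h2 hc σ.symm with h | h
  · rw [h] at hσ
    exact absurd hσ.symm hcpx
  · rw [h] at hσ
    exact RingHom.congr_fun hσ x

/-- The solutions of a norm equation are finite in number: `|φ β|² = |φ n|` for every complex
embedding `φ`, so the integral solutions have bounded conjugates. -/
theorem finite_integral_norm_eq (hF : ∀ v : InfinitePlace F, v.IsReal)
    (hK : ∀ w : InfinitePlace K, w.IsComplex) (h2 : Module.finrank F K = 2) {c : K ≃ₐ[F] K}
    (hc : c ≠ AlgEquiv.refl) (n : K) :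
    {β : K | IsIntegral ℤ β ∧ β * c β = n}.Finite := by
  obtain ⟨B, hB⟩ : ∃ B : ℝ, ∀ φ : K →+* ℂ, ‖φ n‖ ≤ B := by
    obtain ⟨B, hB⟩ := (Set.finite_range fun φ : K →+* ℂ => ‖φ n‖).bddAbove
    exact ⟨B, fun φ => hB ⟨φ, rfl⟩⟩
  refine (NumberField.Embeddings.finite_of_norm_le K ℂ (max B 1)).subset ?_
  rintro β ⟨hi, hβ⟩
  refine ⟨hi, fun φ => ?_⟩
  have h1 : ‖φ β‖ * ‖φ β‖ ≤ B := by
    refine le_trans (le_of_eq ?_) (hB φ)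
    rw [← hβ, map_mul, embedding_conj hF hK h2 hc, norm_mul, RCLike.norm_conj]
  by_contra! h
  obtain ⟨h3, h4⟩ := max_lt_iff.1 h
  nlinarith

/-! ### The kernel of the extension map on class groups -/

theorem smul_extended (c : K ≃ₐ[F] K) (A : Ideal (𝓞 F)) :
    c • A.map (algebraMap (𝓞 F) (𝓞 K)) = A.map (algebraMap (𝓞 F) (𝓞 K)) := by
  rw [Ideal.pointwise_smul_def, Ideal.map_map]
  congr 1
  ext x
  exact c.commutes x

theorem smul_span_singleton (c : K ≃ₐ[F] K) (x : 𝓞 K) :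
    c • Ideal.span {x} = Ideal.span {c • x} := by
  rw [Ideal.smul_closure, Set.smul_set_singleton]

/-- Conjugation inverts roots of unity. -/
theorem torsion_conj (hF : ∀ v : InfinitePlace F, v.IsReal)
    (hK : ∀ w : InfinitePlace K, w.IsComplex) (h2 : Module.finrank F K = 2) {c : K ≃ₐ[F] K}
    (hc : c ≠ AlgEquiv.refl) (z : Units.torsion K) :
    c ((z : (𝓞 K)ˣ) : K) * ((z : (𝓞 K)ˣ) : K) = 1 := by
  have hz := (Units.mem_torsion K).1 z.2
  let φ : K →+* ℂ := (Classical.arbitrary (InfinitePlace K)).embedding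
  apply φ.injective
  rw [map_mul, embedding_conj hF hK h2 hc, RCLike.conj_mul, map_one]
  have : ‖φ ((z : (𝓞 K)ˣ) : K)‖ = 1 := hz (InfinitePlace.mk φ)
  rw [this]; simp

theorem extended_injective {A B : Ideal (𝓞 F)}
    (h : A.map (algebraMap (𝓞 F) (𝓞 K)) = B.map (algebraMap (𝓞 F) (𝓞 K))) : A = B := by
  apply FractionalIdeal.coeIdeal_injective (K := F)
  apply FractionalIdeal.extendedHom_injective (𝓞 F) F K (𝓞 K)
  simp only [FractionalIdeal.extendedHom_coeIdeal_eq_map, h]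

/-- The extension map on class groups has kernel of order at most two.  A class in the kernel is
represented by some `A` with `A 𝓞_K = (γ)`; sending it to the exponent `e` modulo two, where
`c γ = g ^ e * γ` and `g` generates the roots of unity, is injective. -/
theorem card_ker_le (hF : ∀ v : InfinitePlace F, v.IsReal)
    (hK : ∀ w : InfinitePlace K, w.IsComplex) (h2 : Module.finrank F K = 2) {c : K ≃ₐ[F] K}
    (hc : c ≠ AlgEquiv.refl) :
    Nat.card (ClassGroup.extendedHom (𝓞 F) (𝓞 K)).ker ≤ 2 := by
  obtain ⟨g, hg⟩ := IsCyclic.exists_zpow_surjective (G := Units.torsion K)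
  have key : ∀ t : (ClassGroup.extendedHom (𝓞 F) (𝓞 K)).ker, ∃ (A : (Ideal (𝓞 F))⁰) (γ : 𝓞 K)
      (e : ℤ), ClassGroup.mk0 A = t.1 ∧ (A : Ideal (𝓞 F)).map (algebraMap (𝓞 F) (𝓞 K)) =
        Ideal.span {γ} ∧ γ ≠ 0 ∧ c γ = (((g ^ e : Units.torsion K) : (𝓞 K)ˣ) : K) * γ := by
    rintro ⟨t, ht⟩
    obtain ⟨A, rfl⟩ := ClassGroup.mk0_surjective t
    rw [MonoidHom.mem_ker, ClassGroup.extendedHom_mk0, ClassGroup.mk0_eq_one_iff] at ht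
    obtain ⟨γ, hγ⟩ := ht
    change _ = Ideal.span {γ} at hγ
    change (A : Ideal (𝓞 F)).map (algebraMap (𝓞 F) (𝓞 K)) = _ at hγ
    have hγ0 : γ ≠ 0 := by
      rintro rfl
      have hA := (ClassGroup.extendedIdeal (𝓞 F) (𝓞 K) A).2
      apply mem_nonZeroDivisors_iff_ne_zero.1 hA
      change (A : Ideal (𝓞 F)).map (algebraMap (𝓞 F) (𝓞 K)) = _
      rw [hγ]; simp
    have hcγ : Ideal.span {γ} = Ideal.span {c • γ} := by
      rw [← smul_span_singleton, ← hγ, smul_extended]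
    obtain ⟨u, hu⟩ := Ideal.span_singleton_eq_span_singleton.1 hcγ
    have hu' : c γ = (u : K) * γ := by
      have := congrArg (algebraMap (𝓞 K) K) hu
      rw [map_mul, mul_comm] at this
      exact this.symm
    -- a unit all of whose absolute values are one is a root of unity
    have hut : u ∈ Units.torsion K := by
      rw [Units.mem_torsion, InfinitePlace.eq_iff_eq (u : K) 1]
      intro φ
      have h := congrArg (fun x => ‖φ x‖) hu'
      simp only [embedding_conj hF hK h2 hc, RCLike.norm_conj, map_mul, norm_mul] at h
      have h0 : ‖φ γ‖ ≠ 0 := by simpa using hγ0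
      field_simp at h
      exact h.symm
    obtain ⟨e, he⟩ := hg ⟨u, hut⟩
    exact ⟨A, γ, e, rfl, hγ, hγ0, by rw [show g ^ e = ⟨u, hut⟩ from he]; exact hu'⟩
  choose A γ e hA hγ hγ0 he using key
  have hinj : Function.Injective (fun t => ((e t : ℤ) : ZMod 2)) := by
    intro t t' h
    obtain ⟨m, hm⟩ := (ZMod.intCast_eq_intCast_iff_dvd_sub (e t') (e t) 2).1 h.symm
    have hm' : g ^ e t = g ^ e t' * (g ^ m * g ^ m) := by
      rw [← zpow_add, ← zpow_add]
      congr 1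
      push_cast at hm
      omega
    have hζ := torsion_conj hF hK h2 hc (g ^ m)
    have h1 := he t
    have h3 := he t'
    rw [hm'] at h1
    have h4 : algebraMap (𝓞 K) K ((g ^ e t' * (g ^ m * g ^ m) : Units.torsion K) : (𝓞 K)ˣ) =
        algebraMap (𝓞 K) K ((g ^ e t' : Units.torsion K) : (𝓞 K)ˣ) *
        (algebraMap (𝓞 K) K ((g ^ m : Units.torsion K) : (𝓞 K)ˣ) *
          algebraMap (𝓞 K) K ((g ^ m : Units.torsion K) : (𝓞 K)ˣ)) := by
      simp only [Subgroup.coe_mul, Units.val_mul, map_mul]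
    rw [h4] at h1
    set ζ : K := algebraMap (𝓞 K) K ((g ^ m : Units.torsion K) : (𝓞 K)ˣ) with hζd
    set η : K := algebraMap (𝓞 K) K ((g ^ e t' : Units.torsion K) : (𝓞 K)ˣ) with hηd
    have hγt : (γ t : K) ≠ 0 := by simpa using hγ0 t
    have hγt' : (γ t' : K) ≠ 0 := by simpa using hγ0 t'
    have hη : η ≠ 0 := by simp [hηd]
    have hζ0 : ζ ≠ 0 := by simp [hζd]
    -- the ratio of the two generators, corrected by the root of unity, is fixed by conjugation
    obtain ⟨r, hr⟩ := mem_range_of_conj_eq h2 hc (x := ζ * γ t / γ t') (by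
      rw [map_div₀, map_mul, h1, h3, div_eq_div_iff (by positivity) hγt']
      linear_combination (η * ζ * γ t * γ t') * hζ)
    obtain ⟨a, b, hb, rfl⟩ := IsFractionRing.div_surjective (A := 𝓞 F) r
    have hb0 : b ≠ 0 := nonZeroDivisors.ne_zero hb
    have hbK : algebraMap F K b ≠ 0 := by simpa using hb0
    have hab : algebraMap F K b * ζ * γ t = algebraMap F K a * γ t' := by
      rw [map_div₀, div_eq_div_iff hbK hγt'] at hr
      linear_combination -hr
    have ha0 : a ≠ 0 := by
      rintro rfl
      simp [hγt, hζ0, hbK] at hab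
    have hab' : algebraMap (𝓞 F) (𝓞 K) b * γ t * ((g ^ m : Units.torsion K) : (𝓞 K)ˣ) =
        algebraMap (𝓞 F) (𝓞 K) a * γ t' := by
      apply RingOfIntegers.coe_injective
      refine Eq.trans ?_ hab
      rw [map_mul, map_mul]
      change algebraMap F K b * _ * ζ = _
      ring
    have hspan : Ideal.span {algebraMap (𝓞 F) (𝓞 K) b * γ t} =
        Ideal.span {algebraMap (𝓞 F) (𝓞 K) a * γ t'} :=
      Ideal.span_singleton_eq_span_singleton.2 ⟨_, hab'⟩
    have hmap : (Ideal.span {b} * (A t : Ideal (𝓞 F))).map (algebraMap (𝓞 F) (𝓞 K)) =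
        (Ideal.span {a} * (A t' : Ideal (𝓞 F))).map (algebraMap (𝓞 F) (𝓞 K)) := by
      rw [Ideal.map_mul, Ideal.map_mul, hγ, hγ, Ideal.map_span, Ideal.map_span,
        Set.image_singleton, Set.image_singleton, Ideal.span_singleton_mul_span_singleton,
        Ideal.span_singleton_mul_span_singleton, hspan]
    have hI := extended_injective hmap
    apply Subtype.ext
    rw [← hA t, ← hA t']
    exact ClassGroup.mk0_eq_mk0_iff.2 ⟨b, a, hb0, ha0, hI⟩
  simpa using! Nat.card_le_card_of_injective _ hinj

/-! ### Norms of ideals -/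

/-- For an integral ideal `I`, the module `normSpan` is the relative norm of `I`. -/
theorem normSpan_coeIdeal (h2 : Module.finrank F K = 2) {c : K ≃ₐ[F] K}
    (hc : c ≠ AlgEquiv.refl) (I : Ideal (𝓞 K)) :
    normSpan F K c (I : FractionalIdeal (𝓞 K)⁰ K) =
      Submodule.map (Algebra.linearMap (𝓞 F) F) (Ideal.relNorm (𝓞 F) I) := by
  rw [Ideal.relNorm_apply, ← Ideal.submodule_span_eq,
    Submodule.map_span, normSpan]
  congr 1
  ext x
  simp only [Set.mem_ofPred_eq, Set.mem_image, SetLike.mem_coe, exists_exists_and_eq_and,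
    FractionalIdeal.coe_coeIdeal, IsLocalization.mem_coeSubmodule]
  have hx : ∀ β : 𝓞 K, Algebra.linearMap (𝓞 F) F (Algebra.intNorm (𝓞 F) (𝓞 K) β) =
      Algebra.norm F (β : K) := fun β => Algebra.algebraMap_intNorm (A := 𝓞 F) (K := F) (L := K) β
  constructor
  · rintro ⟨β, hβ, h⟩
    refine ⟨β, hβ, ?_⟩
    rw [hx]
    apply (algebraMap F K).injective
    rw [norm_eq h2 hc, h]
  · rintro ⟨β, hβ, rfl⟩
    refine ⟨β, hβ, ?_⟩
    rw [hx, norm_eq h2 hc]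

/-- If `(m) = N(I) A`, then `N(I)/(m)` has as many elements as `𝓞_F/A`: the index of `(m)` in
`N(I)` is the quotient of the absolute norms. -/
theorem normQuotCard_coeIdeal (h2 : Module.finrank F K = 2) {c : K ≃ₐ[F] K}
    (hc : c ≠ AlgEquiv.refl) (I : Ideal (𝓞 K)) {A : Ideal (𝓞 F)} {m : 𝓞 F} (hm : m ≠ 0)
    (h : Ideal.relNorm (𝓞 F) I * A = Ideal.span {m}) :
    algebraMap (𝓞 F) F m ∈ normSpan F K c (I : FractionalIdeal (𝓞 K)⁰ K) ∧
    normQuotCard F K c (I : FractionalIdeal (𝓞 K)⁰ K) (algebraMap (𝓞 F) F m) =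
      Nat.card (𝓞 F ⧸ A) := by
  set N := Ideal.relNorm (𝓞 F) I with hN
  have hle : Ideal.span {m} ≤ N := h ▸ Ideal.mul_le_left
  have hinj : Function.Injective (Algebra.linearMap (𝓞 F) F) :=
    FaithfulSMul.algebraMap_injective (𝓞 F) F
  have hspan : Submodule.span (𝓞 F) {algebraMap (𝓞 F) F m} =
      Submodule.map (Algebra.linearMap (𝓞 F) F) (Ideal.span {m}) := by
    rw [← Ideal.submodule_span_eq, Submodule.map_span, Set.image_singleton]; rfl
  constructor
  · rw [normSpan_coeIdeal h2 hc]
    exact ⟨m, hle (Ideal.mem_span_singleton_self m), rfl⟩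
  rw [normQuotCard, normSpan_coeIdeal h2 hc, hspan]
  have e1 : Nat.card ((Submodule.map (Algebra.linearMap (𝓞 F) F) N) ⧸
      (Submodule.map (Algebra.linearMap (𝓞 F) F) (Ideal.span {m})).comap
        (Submodule.map (Algebra.linearMap (𝓞 F) F) N).subtype) =
      Nat.card (N ⧸ Submodule.comap (Submodule.subtype N) (Ideal.span {m})) := by
    refine Nat.card_congr (Submodule.Quotient.equiv _ _
      (Submodule.equivMapOfInjective _ hinj N).symm ?_).toEquiv
    ext x
    simp only [Submodule.mem_map, Submodule.mem_comap]
    constructor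
    · rintro ⟨y, ⟨z, hz, hzy⟩, rfl⟩
      obtain ⟨w, rfl⟩ := (Submodule.equivMapOfInjective _ hinj N).surjective y
      have := hinj hzy
      simpa [← this] using hz
    · intro hx
      exact ⟨Submodule.equivMapOfInjective _ hinj N x, ⟨x, hx, rfl⟩, by simp⟩
  rw [e1]
  have e2 : Nat.card (N ⧸ Submodule.comap (Submodule.subtype N) (Ideal.span {m})) =
    (Ideal.span {m}).toAddSubgroup.relIndex N.toAddSubgroup := rfl
  have e3 := AddSubgroup.relIndex_mul_index (H := (Ideal.span {m}).toAddSubgroup)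
    (K := N.toAddSubgroup) hle
  have e4 : (Ideal.span {m}).toAddSubgroup.index = Ideal.absNorm (Ideal.span {m}) := rfl
  have e5 : N.toAddSubgroup.index = Ideal.absNorm N := rfl
  have e6 : Ideal.absNorm (Ideal.span {m}) = Ideal.absNorm N * Ideal.absNorm A := by
    rw [← h, map_mul]
  rw [← e2, e4, e5, e6, mul_comm] at e3
  have hN0 : Ideal.absNorm N ≠ 0 := by
    rw [Ne, Ideal.absNorm_eq_zero_iff]
    intro h0
    rw [h0, le_bot_iff, Ideal.span_singleton_eq_bot] at hle
    exact hm hle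
  exact mul_left_cancel₀ hN0 e3

/-- The two primes above a split prime are exchanged by the conjugation. -/
theorem split_conj (h2 : Module.finrank F K = 2) {c : K ≃ₐ[F] K} (hc : c ≠ AlgEquiv.refl)
    {p : Ideal (𝓞 F)} (hp : p.IsPrime) (hp0 : p ≠ ⊥) {Q₁ Q₂ : Ideal (𝓞 K)} (hne : Q₁ ≠ Q₂)
    (h₁ : Q₁.IsPrime) (h₂ : Q₂.IsPrime)
    (h : p.map (algebraMap (𝓞 F) (𝓞 K)) = Q₁ * Q₂) : Q₂ = c • Q₁ := by
  have hq : Algebra.IsQuadraticExtension F K := ⟨h2⟩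
  have hpm : p.IsMaximal := hp.isMaximal hp0
  have hl : ∀ Q : Ideal (𝓞 K), Q.IsPrime → Q₁ * Q₂ ≤ Q → Q.LiesOver p := fun Q hQ hle => by
    rw [← h, Ideal.map_le_iff_le_comap] at hle
    exact ⟨hpm.eq_of_le (Ideal.comap_ne_top _ hQ.ne_top) hle⟩
  have hl₁ := hl Q₁ h₁ Ideal.mul_le_left
  have hl₂ := hl Q₂ h₂ Ideal.mul_le_right
  obtain ⟨σ, hσ⟩ := Ideal.exists_smul_eq_of_isGaloisGroup p Q₁ Q₂ (K ≃ₐ[F] K)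
  rcases gal_cases h2 hc σ with rfl | rfl
  · exact absurd (by simpa using hσ) hne
  · exact hσ.symm

theorem sq_cancel {A B : Ideal (𝓞 F)} (h : A ^ 2 = B ^ 2) : A = B := by
  have key : ∀ {A B : Ideal (𝓞 F)}, A ^ 2 = B ^ 2 → A ∣ B := fun h =>
    (UniqueFactorizationMonoid.pow_dvd_pow_iff_dvd two_ne_zero).1 h.dvd
  exact dvd_antisymm (key h) (key h.symm)

/-- Taking relative norms in `J · c J = A 𝓞_K` gives `N(J)² = A²`. -/
theorem relNorm_of_mul_conj (h2 : Module.finrank F K = 2) {c : K ≃ₐ[F] K}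
    {J : Ideal (𝓞 K)} {A : Ideal (𝓞 F)} (h : J * c • J = A.map (algebraMap (𝓞 F) (𝓞 K))) :
    Ideal.relNorm (𝓞 F) J = A := by
  have hq : Algebra.IsQuadraticExtension F K := ⟨h2⟩
  have hcomm : SMulCommClass (K ≃ₐ[F] K) (𝓞 F) (𝓞 K) :=
    (inferInstance : IsGaloisGroup (K ≃ₐ[F] K) (𝓞 F) (𝓞 K)).commutes
  have h' := congrArg (Ideal.relNorm (𝓞 F)) h
  have hfr : Module.finrank (𝓞 F) (𝓞 K) = 2 := by
    rw [← h2]; exact (IsFractionRing.finrank_eq (𝓞 F) F (𝓞 K) K).symm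
  rw [map_mul, Ideal.relNorm_smul, Ideal.relNorm_algebraMap, ← sq, hfr] at h'
  exact sq_cancel h'

/-! ### Ideals in the same class modulo extended ideals -/

theorem conj_relation_aux {R : Type*} [CommMonoidWithZero R] [IsCancelMulZero R]
    {X Y X' Y' B D σB σB' σD σD' A : R} (h : X * B = Y * (D * A))
    (hs : X' * σB = Y' * (σD * A)) (hBD' : σB * σB' = σD * σD')
    (hB : σB ≠ 0) (hD : σD ≠ 0) (hA : A ≠ 0) :
    X * Y' * (B * σB') = Y * X' * (D * σD') := by
  apply mul_right_cancel₀ (mul_ne_zero (mul_ne_zero hB hD) hA)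
  calc _ = (X * B) * (Y' * (σD * A)) * (σB * σB') := by ac_rfl
    _ = (Y * (D * A)) * (X' * σB) * (σD * σD') := by rw [h, hs, hBD']
    _ = _ := by ac_rfl

theorem mul_conj_aux {R : Type*} [CommRing R] [IsDomain R] {x y x' y' n b b' : R}
    (hb : y * x' * n = x * y' * b) (hb' : y' * x * n = x' * y * b') (h : x * y' ≠ 0)
    (h' : x' * y ≠ 0) : b * b' = n ^ 2 := by
  apply mul_left_cancel₀ (mul_ne_zero h h')
  linear_combination (-(x' * y * b')) * hb - (y * x' * n) * hb'

/-- Suppose `B` and `D` are equivalent modulo principal ideals and ideals extended from `𝓞_F`, and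
`B B' = D D'`.  Then `B · c B'` and `D · c D'` differ by the factor `(y · c x) / (x · c y)`, whose
product with its conjugate is `1`.  Hence if `D · c D' · I` is generated by a `c`-invariant `n`,
then `B · c B' · I` is generated by some `b` with `b · c b = n²`. -/
theorem exists_gen {c : K ≃ₐ[F] K} (hcc : c * c = 1) {B B' D D' I : Ideal (𝓞 K)}
    (hB : B ≠ 0) (hD : D ≠ 0) {A : Ideal (𝓞 F)} (hA : A ≠ 0)
    (hBD : B * B' = D * D') {x y n : 𝓞 K} (hx : x ≠ 0) (hy : y ≠ 0) (hn : c • n = n)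
    (h : Ideal.span {x} * B = Ideal.span {y} * (D * A.map (algebraMap (𝓞 F) (𝓞 K))))
    (hI : D * c • D' * I = Ideal.span {n}) :
    ∃ b : 𝓞 K, Ideal.span {b} = B * c • B' * I ∧ b * c • b = n ^ 2 := by
  have hccx : ∀ z : 𝓞 K, c • c • z = z := fun z => by rw [← mul_smul, hcc, one_smul]
  have hne : ∀ z : 𝓞 K, z ≠ 0 → c • z ≠ 0 := fun z hz h0 => hz (by
    rw [← hccx z, h0, smul_zero])
  have hneI : ∀ J : Ideal (𝓞 K), J ≠ 0 → c • J ≠ 0 := fun J hJ h0 => hJ (by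
    have : c • c • J = 0 := by rw [h0, smul_zero]
    rwa [← mul_smul, hcc, one_smul] at this)
  set A' := A.map (algebraMap (𝓞 F) (𝓞 K)) with hA'
  have hA0 : A' ≠ 0 := fun h0 => hA (extended_injective (K := K) (by
    rw [← hA', h0]; simp))
  have hs : Ideal.span {c • x} * c • B = Ideal.span {c • y} * (c • D * A') := by
    have := congrArg (c • ·) h
    simpa only [smul_mul', smul_span_singleton, hA', smul_extended] using this
  have hBD' : c • B * c • B' = c • D * c • D' := by
    rw [← smul_mul', ← smul_mul', hBD]
  -- the extended ideal is fixed by the conjugation and cancels here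
  have h1 : Ideal.span {x * c • y} * (B * c • B') = Ideal.span {y * c • x} * (D * c • D') := by
    rw [← Ideal.span_singleton_mul_span_singleton, ← Ideal.span_singleton_mul_span_singleton]
    exact conj_relation_aux h hs hBD' (hneI B hB) (hneI D hD) hA0
  have h2 : Ideal.span {x * c • y} * (B * c • B' * I) = Ideal.span {y * c • x * n} := by
    rw [← mul_assoc, h1, mul_assoc, hI, Ideal.span_singleton_mul_span_singleton]
  have hxy : x * c • y ≠ 0 := mul_ne_zero hx (hne y hy)
  obtain ⟨b, hb⟩ := exists_eq_mul_right_of_dvd (a := x * c • y) (b := y * c • x * n) (by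
    rw [← Ideal.mem_span_singleton]
    have := Ideal.mem_span_singleton_self (y * c • x * n)
    rw [← h2] at this
    exact Ideal.mul_le_left this)
  refine ⟨b, ?_, ?_⟩
  · rw [hb, ← Ideal.span_singleton_mul_span_singleton (x * c • y) b] at h2
    have h0 : Ideal.span {x * c • y} ≠ 0 := by
      rwa [Ne, Ideal.zero_eq_bot, Ideal.span_singleton_eq_bot]
    exact (mul_left_cancel₀ h0 h2).symm
  · have hb' := congrArg (c • ·) hb
    simp only [smul_mul', hccx, hn] at hb'
    exact mul_conj_aux hb hb' hxy (mul_ne_zero (hne x hx) hy)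

/-- If the primes `Q i` are distinct from each other and from all `Q' l`, the exponents of the `Q i`
in a product are its `Q i`-adic valuations, hence determined by the product. -/
theorem exponents_injective {ι : Type*} [Fintype ι] {Q Q' : ι → Ideal (𝓞 K)}
    (hQ : ∀ i, Prime (Q i)) (hQ' : ∀ i, Prime (Q' i)) (hinj : Function.Injective Q)
    (hne : ∀ i l, Q i ≠ Q' l) {j j' e e' : ι → ℕ}
    (h : (∏ i, Q i ^ j i) * ∏ i, Q' i ^ e i = (∏ i, Q i ^ j' i) * ∏ i, Q' i ^ e' i) :
    j = j' := by
  classical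
  have key : ∀ (j e : ι → ℕ) (i : ι),
      emultiplicity (Q i) ((∏ l, Q l ^ j l) * ∏ l, Q' l ^ e l) = j i := fun j e i => by
    have h1 : ∀ l, emultiplicity (Q i) (Q l) = if l = i then 1 else 0 := fun l => by
      split_ifs with hl
      · subst hl
        exact (FiniteMultiplicity.of_prime_left (hQ l) (hQ l).ne_zero).emultiplicity_self
      · exact emultiplicity_eq_zero.2 fun hd =>
          hl (hinj (associated_iff_eq.1 ((hQ i).associated_of_dvd (hQ l) hd))).symm
    have h2 : ∀ l, emultiplicity (Q i) (Q' l) = 0 := fun l =>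
      emultiplicity_eq_zero.2 fun hd =>
          hne i l (associated_iff_eq.1 ((hQ i).associated_of_dvd (hQ' l) hd))
    rw [emultiplicity_mul (hQ i), Finset.emultiplicity_prod (hQ i),
      Finset.emultiplicity_prod (hQ i)]
    simp [emultiplicity_pow (hQ i), h1, h2]
  funext i
  have h3 := key j e i
  rw [h, key j' e' i] at h3
  exact_mod_cast h3.symm

/-- The quotient of `Cl(K)` by the image of `Cl(F)` has order `#ker · h(K) / h(F)`, where the kernel
of `Cl(F) → Cl(K)` has order at most two. -/
theorem card_quotient_le (hF : ∀ v : InfinitePlace F, v.IsReal)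
    (hK : ∀ w : InfinitePlace K, w.IsComplex) (h2 : Module.finrank F K = 2) {c : K ≃ₐ[F] K}
    (hc : c ≠ AlgEquiv.refl) :
    Nat.card (ClassGroup (𝓞 K) ⧸ (ClassGroup.extendedHom (𝓞 F) (𝓞 K)).range) * classNumber F ≤
      2 * classNumber K := by
  set f := ClassGroup.extendedHom (𝓞 F) (𝓞 K)
  have h1 : Nat.card f.ker * f.ker.index = classNumber F := by
    rw [Subgroup.card_mul_index, Nat.card_eq_fintype_card]; rfl
  have h3 : f.range.index * Nat.card f.range = classNumber K := by
    rw [Subgroup.index_mul_card, Nat.card_eq_fintype_card]; rfl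
  rw [Subgroup.index_ker] at h1
  calc f.range.index * classNumber F = Nat.card f.ker * (f.range.index * Nat.card f.range) := by
        rw [← h1]; ring
    _ ≤ 2 * classNumber K := by rw [h3]; gcongr; exact card_ker_le hF hK h2 hc

/-! ### The construction -/

/-- The construction of `I` and `α`; the exponents `k` may vanish. -/
theorem exists_ideal_many_solutions
    (d : ℕ) (hd : Module.finrank ℚ F = d)
    (htotallyReal : ∀ v : InfinitePlace F, v.IsReal)
    (htotallyImaginary : ∀ w : InfinitePlace K, w.IsComplex)
    (hquadratic : Module.finrank F K = 2)
    (c : K ≃ₐ[F] K) (hc : c ≠ AlgEquiv.refl)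
    (S : Finset (Ideal (𝓞 F))) (hSprime : ∀ 𝔭 ∈ S, 𝔭.IsPrime ∧ 𝔭 ≠ ⊥)
    (k : Ideal (𝓞 F) → ℕ)
    (hsplit : ∀ 𝔭 ∈ S, ∃ Q₁ Q₂ : Ideal (𝓞 K), Q₁ ≠ Q₂ ∧ Q₁.IsPrime ∧ Q₂.IsPrime ∧
      Ideal.map (algebraMap (𝓞 F) (𝓞 K)) 𝔭 = Q₁ * Q₂) :
    ∃ (I : FractionalIdeal (nonZeroDivisors (𝓞 K)) K) (α : F),
      α ∈ normSpan F K c I ∧ α ≠ 0 ∧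
      (∏ 𝔭 ∈ S, ((k 𝔭 : ℝ) + 1)) / (2 ^ d * ((classNumber K : ℝ) / (classNumber F : ℝ))) ≤
        (Nat.card {β : K // β ∈ I ∧ β * c β = algebraMap F K α} : ℝ) ∧
      normQuotCard F K c I α = ∏ 𝔭 ∈ S, Nat.card ((𝓞 F) ⧸ 𝔭) ^ (k 𝔭) := by
  classical
  have hcc := conj_conj hquadratic hc
  have hinst : Algebra.IsQuadraticExtension F K := ⟨hquadratic⟩
  choose! Q₁ Q₂ hQne hQ₁ hQ₂ hQmul using hsplit
  let Q : S → Ideal (𝓞 K) := fun p => Q₁ p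
  have hQ0 : ∀ p : S, Prime (Q p) := fun p =>
    Ideal.prime_of_isPrime (fun h0 => (hSprime p p.2).2 (by
      have h := hQmul p p.2
      rw [show Q₁ p = ⊥ from h0, Ideal.bot_mul] at h
      exact (Ideal.map_eq_bot_iff_of_injective
        (FaithfulSMul.algebraMap_injective (𝓞 F) (𝓞 K))).1 h)) (hQ₁ p p.2)
  have hQ0' : ∀ p : S, Prime (Q₂ p) := fun p =>
    Ideal.prime_of_isPrime (fun h0 => (hSprime p p.2).2 (by
      have h := hQmul p p.2
      rw [h0, Ideal.mul_bot] at h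
      exact (Ideal.map_eq_bot_iff_of_injective
        (FaithfulSMul.algebraMap_injective (𝓞 F) (𝓞 K))).1 h)) (hQ₂ p p.2)
  have hQc : ∀ p : S, Q₂ p = c • Q p := fun p =>
    split_conj hquadratic hc (hSprime p p.2).1 (hSprime p p.2).2 (hQne p p.2) (hQ₁ p p.2)
      (hQ₂ p p.2) (hQmul p p.2)
  have hlies : ∀ (p : S) (P : Ideal (𝓞 K)), P.IsPrime → Q₁ p * Q₂ p ≤ P →
      P.comap (algebraMap (𝓞 F) (𝓞 K)) = p := fun p P hP hle => by
    rw [← hQmul p p.2, Ideal.map_le_iff_le_comap] at hle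
    exact (((hSprime p p.2).1.isMaximal (hSprime p p.2).2).eq_of_le
      (Ideal.comap_ne_top _ hP.ne_top) hle).symm
  have hl₁ : ∀ p : S, (Q p).comap (algebraMap (𝓞 F) (𝓞 K)) = p := fun p =>
    hlies p _ (hQ₁ p p.2) Ideal.mul_le_left
  have hl₂ : ∀ p : S, (Q₂ p).comap (algebraMap (𝓞 F) (𝓞 K)) = p := fun p =>
    hlies p _ (hQ₂ p p.2) Ideal.mul_le_right
  have hQinj : Function.Injective Q := fun p q h => Subtype.ext (by
    rw [← hl₁ p, ← hl₁ q, h])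
  have hQQ : ∀ p q : S, Q p ≠ Q₂ q := fun p q h => by
    have : p = q := Subtype.ext (by rw [← hl₁ p, ← hl₂ q, h])
    subst this
    exact hQne p p.2 h
  let T := (p : S) → Fin (k p + 1)
  let B : T → Ideal (𝓞 K) := fun j => ∏ p, Q p ^ (j p : ℕ)
  let B' : T → Ideal (𝓞 K) := fun j => ∏ p : S, Q p ^ (k p - j p : ℕ)
  let 𝔞 : Ideal (𝓞 F) := ∏ p ∈ S, p ^ k p
  have hB0 : ∀ j, B j ≠ 0 := fun j => Finset.prod_ne_zero_iff.2 fun p _ =>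
    pow_ne_zero _ (hQ0 p).ne_zero
  have h𝔞0 : 𝔞 ≠ 0 := Finset.prod_ne_zero_iff.2 fun p hp => pow_ne_zero _ (hSprime p hp).2
  have hBB : ∀ j, B j * B' j = ∏ p : S, Q p ^ k p := fun j => by
    rw [← Finset.prod_mul_distrib]
    refine Finset.prod_congr rfl fun p _ => ?_
    rw [← pow_add, Nat.add_sub_cancel' (Nat.lt_succ_iff.1 (j p).2)]
  have hC : (∏ p : S, Q p ^ k p) * c • (∏ p : S, Q p ^ k p) =
      𝔞.map (algebraMap (𝓞 F) (𝓞 K)) := by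
    rw [Finset.smul_prod', ← Finset.prod_mul_distrib, ← Ideal.mapHom_apply, map_prod,
      ← Finset.prod_coe_sort S
        fun p => Ideal.mapHom (algebraMap (𝓞 F) (𝓞 K)) (p ^ k p)]
    refine Finset.prod_congr rfl fun p _ => ?_
    rw [smul_pow', ← mul_pow, Ideal.mapHom_apply, Ideal.map_pow, hQmul p p.2, hQc]
  have hJ : ∀ j, (B j * c • B' j) * c • (B j * c • B' j) =
      𝔞.map (algebraMap (𝓞 F) (𝓞 K)) := fun j => by
    rw [← hC, ← hBB j, smul_mul', smul_mul', ← mul_smul, hcc, one_smul]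
    have key : ∀ a b s t : Ideal (𝓞 K), a * t * (s * b) = a * b * (s * t) := fun a b s t => by
      ac_rfl
    exact key _ _ _ _
  -- the `∏ (k 𝔭 + 1)` tuples are distributed over the quotient of `Cl(K)` by the image of `Cl(F)`
  let f : T → ClassGroup (𝓞 K) ⧸ (ClassGroup.extendedHom (𝓞 F) (𝓞 K)).range := fun j =>
    QuotientGroup.mk (ClassGroup.mk0 ⟨B j, mem_nonZeroDivisors_of_ne_zero (hB0 j)⟩)
  let : Fintype (ClassGroup (𝓞 K) ⧸ (ClassGroup.extendedHom (𝓞 F) (𝓞 K)).range) :=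
    Fintype.ofFinite _
  set X := Fintype.card (ClassGroup (𝓞 K) ⧸ (ClassGroup.extendedHom (𝓞 F) (𝓞 K)).range) with hX
  have hX0 : (0 : ℝ) < X := by exact_mod_cast Fintype.card_pos
  have hcardT : (Fintype.card T : ℝ) = ∏ 𝔭 ∈ S, ((k 𝔭 : ℝ) + 1) := by
    rw [Fintype.card_pi]
    push_cast [Fintype.card_fin]
    exact Finset.prod_coe_sort S fun p => (k p : ℝ) + 1
  obtain ⟨ξ, hξ⟩ := Fintype.exists_le_card_fiber_of_nsmul_le_card (M := ℝ) (f := f)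
    (b := (Fintype.card T : ℝ) / X) (by
      rw [nsmul_eq_mul, mul_div_cancel₀ _ hX0.ne'])
  have hT0 : (0 : ℝ) < Fintype.card T := by
    rw [hcardT]; exact Finset.prod_pos fun p _ => by positivity
  obtain ⟨i, hi⟩ : (Finset.univ.filter fun j => f j = ξ).Nonempty := by
    rw [← Finset.card_pos]
    exact_mod_cast lt_of_lt_of_le (div_pos hT0 hX0) hξ
  replace hi : f i = ξ := by simpa using hi
  -- any nonzero `n ∈ 𝔞` makes `B i * c • B' i` a divisor of `(n)`; `I` is the cofactor
  obtain ⟨n, hn𝔞, hn0⟩ := Submodule.exists_mem_ne_zero_of_ne_bot h𝔞0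
  have hdvd : B i * c • B' i ∣ Ideal.span {algebraMap (𝓞 F) (𝓞 K) n} := by
    refine (Dvd.intro _ (hJ i)).trans ?_
    rw [Ideal.dvd_span_singleton]
    exact Ideal.mem_map_of_mem _ hn𝔞
  obtain ⟨I, hI⟩ := hdvd
  have hnorm : Ideal.relNorm (𝓞 F) I * 𝔞 = Ideal.span {n ^ 2} := by
    have h := congrArg (Ideal.relNorm (𝓞 F)) hI
    rw [map_mul, relNorm_of_mul_conj hquadratic (hJ i)] at h
    rw [mul_comm, ← h]
    have hfr : Module.finrank (𝓞 F) (𝓞 K) = 2 := by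
      rw [← hquadratic]; exact (IsFractionRing.finrank_eq (𝓞 F) F (𝓞 K) K).symm
    rw [← Set.image_singleton, ← Ideal.map_span, Ideal.relNorm_algebraMap, hfr,
      Ideal.span_singleton_pow]
  obtain ⟨hmem, hquot⟩ := normQuotCard_coeIdeal hquadratic hc I (pow_ne_zero 2 hn0) hnorm
  refine ⟨I, algebraMap (𝓞 F) F (n ^ 2), hmem, by simpa using hn0, ?_, ?_⟩
  swap
  · rw [hquot]
    change Ideal.absNorm 𝔞 = ∏ 𝔭 ∈ S, Ideal.absNorm 𝔭 ^ k 𝔭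
    rw [map_prod]
    simp only [map_pow]
  have hcn : c • algebraMap (𝓞 F) (𝓞 K) n = algebraMap (𝓞 F) (𝓞 K) n :=
    RingOfIntegers.coe_injective (c.commutes n)
  have hgen : ∀ j : {j : T // f j = ξ}, ∃ b : 𝓞 K, Ideal.span {b} = B j * c • B' j * I ∧
      b * c • b = (algebraMap (𝓞 F) (𝓞 K) n) ^ 2 := by
    rintro ⟨j, hj⟩
    obtain ⟨t, ht⟩ := QuotientGroup.eq.1 (hi.trans hj.symm)
    obtain ⟨A, rfl⟩ := ClassGroup.mk0_surjective t
    rw [eq_inv_mul_iff_mul_eq, ClassGroup.extendedHom_mk0, ← map_mul] at ht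
    obtain ⟨y, x, hy, hx, hyx⟩ := ClassGroup.mk0_eq_mk0_iff.1 ht
    exact exists_gen hcc (hB0 j) (hB0 i) (nonZeroDivisors.ne_zero A.2)
      ((hBB j).trans (hBB i).symm) hx hy hcn hyx.symm hI.symm
  choose b hbspan hbnorm using hgen
  have hI0 : I ≠ 0 := by
    rintro rfl
    rw [mul_zero, Ideal.zero_eq_bot, Ideal.span_singleton_eq_bot] at hI
    exact hn0 ((FaithfulSMul.algebraMap_injective (𝓞 F) (𝓞 K)) (by rw [hI, map_zero]))
  -- distinct tuples give distinct ideals `span {b j}`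
  have hbinj : Function.Injective b := by
    intro j j' h
    have h1 : B j * c • B' j = B j' * c • B' j' := by
      apply mul_right_cancel₀ hI0
      rw [← hbspan, ← hbspan, h]
    have h3 : ∀ j, c • B' j = ∏ p : S, Q₂ p ^ (k p - j p : ℕ) := fun j => by
      rw [Finset.smul_prod']
      exact Finset.prod_congr rfl fun p _ => by rw [smul_pow', hQc]
    rw [h3, h3] at h1
    have h4 := exponents_injective hQ0 hQ0' hQinj hQQ h1
    exact Subtype.ext (funext fun p => Fin.ext (congrFun h4 p))
  set R := {β : K // β ∈ (I : FractionalIdeal (𝓞 K)⁰ K) ∧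
    β * c β = algebraMap F K (algebraMap (𝓞 F) F (n ^ 2))}
  have hRfin : Finite R := by
    refine ((finite_integral_norm_eq htotallyReal htotallyImaginary hquadratic hc
      (algebraMap F K (algebraMap (𝓞 F) F (n ^ 2)))).subset ?_).to_subtype
    rintro β ⟨hβ, hβ'⟩
    obtain ⟨γ, -, rfl⟩ := (FractionalIdeal.mem_coeIdeal _).1 hβ
    exact ⟨γ.isIntegral_coe, hβ'⟩
  have hcount : (Finset.univ.filter fun j => f j = ξ).card ≤ Nat.card R := by
    rw [← Fintype.card_subtype, ← Nat.card_eq_fintype_card]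
    refine Nat.card_le_card_of_injective (fun j => (⟨b j, ?_, ?_⟩ : R)) ?_
    · refine FractionalIdeal.mem_coeIdeal_of_mem _ ?_
      have := Ideal.mem_span_singleton_self (b j)
      rw [hbspan] at this
      exact Ideal.mul_le_right this
    · have := congrArg (algebraMap (𝓞 K) K) (hbnorm j)
      rw [map_mul, map_pow] at this
      rw [map_pow, map_pow]
      exact this
    · intro j j' h
      have h5 : (b j : K) = b j' := congrArg (Subtype.val : R → K) h
      exact hbinj (RingOfIntegers.coe_injective h5)
  have hXle : (X : ℝ) * classNumber F ≤ 2 * classNumber K := by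
    have := card_quotient_le htotallyReal htotallyImaginary hquadratic hc
    rw [Nat.card_eq_fintype_card] at this
    exact_mod_cast this
  have hd1 : (2 : ℝ) ≤ 2 ^ d := by
    have : 1 ≤ d := hd ▸ Module.finrank_pos
    simpa using pow_le_pow_right₀ (one_le_two (α := ℝ)) this
  have hF0 : (0 : ℝ) < classNumber F := by exact_mod_cast Fintype.card_pos
  have hXle' : (X : ℝ) ≤ 2 ^ d * ((classNumber K : ℝ) / classNumber F) := by
    rw [← mul_div_assoc, le_div_iff₀ hF0]
    exact hXle.trans (by gcongr)
  rw [← hcardT]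
  calc _ ≤ (Fintype.card T : ℝ) / X := by gcongr
    _ ≤ _ := hξ
    _ ≤ _ := by exact_mod_cast hcount
end

/-- Let `F` be a totally real number field of degree `d` and `K` a totally imaginary quadratic
extension of `F`, with `c` the nontrivial element of `Gal(K/F)`.  Let `S_F` be a finite set of
nonzero prime ideals of `𝓞 F`, each split in `K`, and `k : S_F → ℕ⁺`.  Then there is a
fractional ideal `I` of `K` and a nonzero `α ∈ N_{K/F}(I)` such that the number of `β ∈ I`
with `β · c β = α` is at least `(∏_{𝔭 ∈ S_F} (k 𝔭 + 1)) / (2^d · h⁻(K))` and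
`#(N_{K/F}(I)/(α)) = ∏_{𝔭 ∈ S_F} #(𝓞_F/𝔭)^{k 𝔭}`. -/
theorem ideal_from_primes
    (d : ℕ) (hd : Module.finrank ℚ F = d)
    (htotallyReal : ∀ v : InfinitePlace F, v.IsReal)
    (htotallyImaginary : ∀ w : InfinitePlace K, w.IsComplex)
    (hquadratic : Module.finrank F K = 2)
    (c : K ≃ₐ[F] K) (hc : c ≠ AlgEquiv.refl)
    (S : Finset (Ideal (𝓞 F))) (hSprime : ∀ 𝔭 ∈ S, 𝔭.IsPrime ∧ 𝔭 ≠ ⊥)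
    (k : Ideal (𝓞 F) → ℕ) (hk : ∀ 𝔭 ∈ S, 1 ≤ k 𝔭)
    (hsplit : ∀ 𝔭 ∈ S, ∃ Q₁ Q₂ : Ideal (𝓞 K), Q₁ ≠ Q₂ ∧ Q₁.IsPrime ∧ Q₂.IsPrime ∧
      Ideal.map (algebraMap (𝓞 F) (𝓞 K)) 𝔭 = Q₁ * Q₂) :
    ∃ (I : FractionalIdeal (nonZeroDivisors (𝓞 K)) K) (α : F),
      α ∈ normSpan F K c I ∧ α ≠ 0 ∧
      (∏ 𝔭 ∈ S, ((k 𝔭 : ℝ) + 1)) / (2 ^ d * ((classNumber K : ℝ) / (classNumber F : ℝ))) ≤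
        (Nat.card {β : K // β ∈ I ∧ β * c β = algebraMap F K α} : ℝ) ∧
      normQuotCard F K c I α = ∏ 𝔭 ∈ S, Nat.card ((𝓞 F) ⧸ 𝔭) ^ (k 𝔭) := by
  exact exists_ideal_many_solutions d hd htotallyReal htotallyImaginary hquadratic c hc S hSprime
    k hsplit
end

section
/- For any number field K, the number w_K of roots of unity contained in K satisfies w_K ≤ 2 · rd_K², where rd_K = Δ_K^{1/[K:ℚ]} is the root discriminant of K and Δ_K is the absolute value of the discriminant of K. -/
/-!
Let `n = w_K`. The group of roots of unity of `K` is cyclic, so `K` contains a primitive `n`-th root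
of unity `ζ`, and hence the cyclotomic field `F = ℚ(ζ)`, of degree `φ(n)`. The tower formula for
discriminants gives `|Δ_F| ^ [K:F] ≤ |Δ_K|`, while
`|Δ_F| = n ^ φ(n) / ∏_{p ∣ n} p ^ (φ(n) / (p - 1))`.
It therefore suffices to show `n ^ φ(n) ≤ 2 ^ φ(n) * |Δ_F| ^ 2`, that is,
`(∏_{p ∣ n} p ^ (φ(n) / (p - 1))) ^ 2 ≤ 2 ^ φ(n) * n ^ φ(n)`. An odd prime `p` contributes at most
`p ^ φ(n)` to the left side because `2 / (p - 1) ≤ 1`; the prime `2` contributes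
`2 ^ φ(n) * 2 ^ φ(n)`, which accounts for the factor `2 ^ φ(n)`; and `∏_{p ∣ n} p ≤ n`.
All of this is done with integers, and the `[K:ℚ]`-th root is taken only at the end.
-/

open NumberField

lemma sq_prod_primeFactors_pow_le {n : ℕ} (hn : 0 < n) (t : ℕ) :
    (∏ p ∈ n.primeFactors, p ^ (t / (p - 1))) ^ 2 ≤ 2 ^ t * n ^ t := by
  calc (∏ p ∈ n.primeFactors, p ^ (t / (p - 1))) ^ 2
      = ∏ p ∈ n.primeFactors, (p ^ (t / (p - 1))) ^ 2 := (Finset.prod_pow _ _ _).symm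
    _ ≤ ∏ p ∈ n.primeFactors, (if p = 2 then 2 ^ t else 1) * p ^ t := by
        refine Finset.prod_le_prod' fun p hp => ?_
        have hp' := Nat.prime_of_mem_primeFactors hp
        split_ifs with h
        · subst h
          simp [sq]
        · have h3 : 2 ≤ p - 1 := by have := hp'.two_le; omega
          rw [one_mul, ← pow_mul]
          refine Nat.pow_le_pow_right hp'.pos ?_
          calc t / (p - 1) * 2 ≤ t / (p - 1) * (p - 1) := Nat.mul_le_mul_left _ h3
            _ ≤ t := Nat.div_mul_le_self _ _
    _ = (if 2 ∈ n.primeFactors then 2 ^ t else 1) * (∏ p ∈ n.primeFactors, p) ^ t := by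
        rw [Finset.prod_mul_distrib, Finset.prod_pow, Finset.prod_ite_eq']
    _ ≤ 2 ^ t * n ^ t := by
        gcongr
        · split_ifs
          · exact le_rfl
          · exact Nat.one_le_two_pow
        · exact Nat.le_of_dvd hn (Nat.prod_primeFactors_dvd n)

/-- The inequality for `ℚ(μ_n)`, raised to the power `φ(n)`. -/
lemma pow_totient_le_natAbs_discr_sq (n : ℕ) [NeZero n] (F : Type*) [Field F] [NumberField F]
    [IsCyclotomicExtension {n} ℚ F] :
    n ^ n.totient ≤ 2 ^ n.totient * (discr F).natAbs ^ 2 := by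
  have hn : 0 < n := NeZero.pos n
  set P := ∏ p ∈ n.primeFactors, p ^ (n.totient / (p - 1)) with hP
  have hD : (discr F).natAbs * P = n ^ n.totient := by
    rw [IsCyclotomicExtension.Rat.natAbs_discr n F]
    exact Nat.div_mul_cancel (Nat.prod_primeFactors_pow_totient_ediv_dvd hn)
  have hle : P ^ 2 ≤ 2 ^ n.totient * n ^ n.totient := sq_prod_primeFactors_pow_le hn _
  refine Nat.le_of_mul_le_mul_right ?_ (pow_pos hn n.totient)
  calc n ^ n.totient * n ^ n.totient = (discr F).natAbs ^ 2 * P ^ 2 := by rw [← hD]; ring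
    _ ≤ (discr F).natAbs ^ 2 * (2 ^ n.totient * n ^ n.totient) := Nat.mul_le_mul_left _ hle
    _ = 2 ^ n.totient * (discr F).natAbs ^ 2 * n ^ n.totient := by ring

lemma pow_finrank_le_of_isPrimitiveRoot {K : Type*} [Field K] [NumberField K] {n : ℕ} [NeZero n]
    {ζ : K} (hζ : IsPrimitiveRoot ζ n) :
    n ^ Module.finrank ℚ K ≤ 2 ^ Module.finrank ℚ K * (discr K).natAbs ^ 2 := by
  let F := IntermediateField.adjoin ℚ {ζ}
  have hF : IsCyclotomicExtension {n} ℚ F :=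
    hζ.intermediateField_adjoin_isCyclotomicExtension ℚ
  have hdeg : n.totient * Module.finrank F K = Module.finrank ℚ K := by
    rw [← IsCyclotomicExtension.Rat.finrank n F, Module.finrank_mul_finrank]
  have htower : (discr F).natAbs ^ Module.finrank F K ≤ (discr K).natAbs := by
    rw [natAbs_discr_eq_absNorm_differentIdeal_mul_natAbs_discr_pow F (𝓞 F) K (𝓞 K)]
    refine Nat.le_mul_of_pos_left _ (Nat.pos_of_ne_zero ?_)
    rw [Ne, Ideal.absNorm_eq_zero_iff]
    exact differentIdeal_ne_bot
  calc n ^ Module.finrank ℚ K = (n ^ n.totient) ^ Module.finrank F K := by rw [← hdeg, pow_mul]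
    _ ≤ (2 ^ n.totient * (discr F).natAbs ^ 2) ^ Module.finrank F K :=
        Nat.pow_le_pow_left (pow_totient_le_natAbs_discr_sq n F) _
    _ = 2 ^ Module.finrank ℚ K * ((discr F).natAbs ^ Module.finrank F K) ^ 2 := by
        rw [← hdeg]; ring
    _ ≤ 2 ^ Module.finrank ℚ K * (discr K).natAbs ^ 2 := by gcongr

lemma card_rootsOfUnity_eq_torsionOrder (K : Type*) [Field K] [NumberField K] :
    Nat.card {ζ : K // ∃ n : ℕ, 0 < n ∧ ζ ^ n = 1} = Units.torsionOrder K := by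
  symm
  refine Nat.card_congr (Equiv.ofBijective
    (fun u : Units.torsion K => ⟨((u : (𝓞 K)ˣ) : K), ?_⟩) ⟨?_, ?_⟩)
  · obtain ⟨n, hn, h⟩ := isOfFinOrder_iff_pow_eq_one.mp ((CommGroup.mem_torsion _).mp u.2)
    exact ⟨n, hn, by rw [← Units.coe_pow, h, Units.coe_one]⟩
  · intro u v h
    exact Subtype.ext (Units.coe_injective K (Subtype.mk.inj h))
  · rintro ⟨ζ, n, hn, h⟩
    have hint : IsIntegral ℤ ζ := IsIntegral.of_pow hn (h ▸ isIntegral_one)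
    have hz : (⟨ζ, hint⟩ : 𝓞 K) ^ n = 1 := RingOfIntegers.ext h
    refine ⟨⟨Units.ofPowEqOne _ n hz hn.ne', ?_⟩, rfl⟩
    exact (CommGroup.mem_torsion _).mpr
      (isOfFinOrder_iff_pow_eq_one.mpr ⟨n, hn, Units.pow_ofPowEqOne hz hn.ne'⟩)

lemma exists_isPrimitiveRoot_torsionOrder (K : Type*) [Field K] [NumberField K] :
    ∃ ζ : K, IsPrimitiveRoot ζ (Units.torsionOrder K) := by
  obtain ⟨g, hg⟩ := IsCyclic.exists_ofOrder_eq_natCard (α := Units.torsion K)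
  refine ⟨((g : (𝓞 K)ˣ) : K), ?_⟩
  rw [IsPrimitiveRoot.coe_coe_iff, IsPrimitiveRoot.coe_submonoidClass_iff, Units.torsionOrder, ← hg]
  exact IsPrimitiveRoot.orderOf g

/-- For any number field `K`, the number `w_K` of roots of unity contained in `K` satisfies
`w_K ≤ 2 · rd_K²`, where `rd_K = |Δ_K|^{1/[K:ℚ]}` is the root discriminant of `K`. -/
theorem rootsOfUnity_le_rootDiscriminant (K : Type) [Field K] [NumberField K] :
    (Nat.card {ζ : K // ∃ n : ℕ, 0 < n ∧ ζ ^ n = 1} : ℝ) ≤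
      2 * (((NumberField.discr K).natAbs : ℝ) ^
        ((1 : ℝ) / (Module.finrank ℚ K : ℝ))) ^ 2 := by
  rw [card_rootsOfUnity_eq_torsionOrder]
  have : NeZero (Units.torsionOrder K) := ⟨Units.torsionOrder_ne_zero K⟩
  obtain ⟨ζ, hζ⟩ := exists_isPrimitiveRoot_torsionOrder K
  have hN : Module.finrank ℚ K ≠ 0 := Module.finrank_pos.ne'
  refine le_of_pow_le_pow_left₀ hN (by positivity) ?_
  rw [mul_pow, pow_right_comm, one_div, Real.rpow_inv_natCast_pow (by positivity) hN]
  exact_mod_cast pow_finrank_le_of_isPrimitiveRoot hζ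
end
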